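/- arXiv:1005.3338 — 11 statements merged into one kernel-verified Lean document; each statement's English description precedes it below -/
import Mathlib

section
/- For all real SNR ≥ 0 and INR ≥ 0, the symmetric outer bound exceeds the symmetric achievable rate by at most 1 bit: C̄_sym(SNR,INR) ≤ R_sym(SNR,INR) + 1, where C̄_sym(SNR,INR) = sup_{ρ∈[0,1]} (1/2)·[ log₂(1 + (1−ρ²)·SNR/(1 + (1−ρ²)·INR)) + log₂(1 + SNR + INR + 2ρ·√(SNR·INR)) ] and R_sym(SNR,INR) = max( (1/2)·log₂(1 + INR), (1/2)·log₂( ((1+SNR+INR)² − SNR/(1+INR)) / (1 + 2·INR) ) ). -/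
open Real Set

/-- The symmetric outer bound exceeds the symmetric achievable rate by at most 1 bit. -/
theorem symmetric_capacity_one_bit_gap (SNR INR : ℝ) (hS : 0 ≤ SNR) (hI : 0 ≤ INR) :
    sSup ((fun ρ : ℝ =>
        (1 / 2) * (Real.logb 2 (1 + (1 - ρ ^ 2) * SNR / (1 + (1 - ρ ^ 2) * INR)) +
          Real.logb 2 (1 + SNR + INR + 2 * ρ * Real.sqrt (SNR * INR)))) '' Set.Icc (0 : ℝ) 1)
      ≤ max ((1 / 2) * Real.logb 2 (1 + INR))
          ((1 / 2) * Real.logb 2 (((1 + SNR + INR) ^ 2 - SNR / (1 + INR)) / (1 + 2 * INR)))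
        + 1 := by
  apply csSup_le ((Set.nonempty_Icc.mpr zero_le_one).image _)
  rintro _ ⟨ρ, ⟨h0, h1⟩, rfl⟩
  have ht0 : 0 ≤ 1 - ρ ^ 2 := by nlinarith
  have ht1 : 1 - ρ ^ 2 ≤ 1 := by nlinarith
  have hsq0 := Real.sqrt_nonneg (SNR * INR)
  have hsq : 2 * Real.sqrt (SNR * INR) ≤ SNR + INR := by
    have : Real.sqrt (SNR * INR) ≤ (SNR + INR) / 2 :=
      Real.sqrt_le_iff.mpr ⟨by positivity, by nlinarith [sq_nonneg (SNR - INR)]⟩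
    linarith
  have hB : 1 + SNR + INR + 2 * ρ * Real.sqrt (SNR * INR) ≤ 2 * (1 + SNR + INR) := by
    nlinarith [mul_nonneg (sub_nonneg.mpr h1) hsq0]
  have hB0 : 0 < 1 + SNR + INR + 2 * ρ * Real.sqrt (SNR * INR) := by positivity
  simp only []
  generalize 1 - ρ ^ 2 = t at *
  have hA0 : 0 < 1 + t * SNR / (1 + t * INR) := by positivity
  have hA : 1 + t * SNR / (1 + t * INR) ≤ (1 + SNR + INR) / (1 + INR) := by
    have h : t * SNR / (1 + t * INR) ≤ SNR / (1 + INR) := by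
      rw [div_le_div_iff₀ (by positivity) (by positivity)]
      nlinarith [mul_nonneg hS (sub_nonneg.mpr ht1)]
    have e : (1 + SNR + INR) / (1 + INR) = 1 + SNR / (1 + INR) := by
      field_simp
      ring
    linarith
  have hkey : (1 + SNR + INR) / (1 + INR) * (2 * (1 + SNR + INR)) ≤
      4 * (((1 + SNR + INR) ^ 2 - SNR / (1 + INR)) / (1 + 2 * INR)) := by
    have e : 4 * (((1 + SNR + INR) ^ 2 - SNR / (1 + INR)) / (1 + 2 * INR)) -
        (1 + SNR + INR) / (1 + INR) * (2 * (1 + SNR + INR)) =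
        2 * ((1 + SNR + INR) ^ 2 - 2 * SNR) / ((1 + INR) * (1 + 2 * INR)) := by
      field_simp
      ring
    have p : 0 ≤ (1 + SNR + INR) ^ 2 - 2 * SNR := by nlinarith [mul_nonneg hS hI]
    have : 0 ≤ 2 * ((1 + SNR + INR) ^ 2 - 2 * SNR) / ((1 + INR) * (1 + 2 * INR)) := by
      positivity
    linarith
  have hAB := (mul_le_mul hA hB hB0.le (by positivity)).trans hkey
  have hpos := mul_pos hA0 hB0
  generalize ((1 + SNR + INR) ^ 2 - SNR / (1 + INR)) / (1 + 2 * INR) = Q at *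
  have hQ : 0 < Q := by linarith
  have hl := Real.logb_le_logb_of_le (b := 2) (by norm_num) hpos hAB
  rw [Real.logb_mul hA0.ne' hB0.ne', Real.logb_mul (by norm_num) hQ.ne'] at hl
  have h4 : Real.logb 2 4 = 2 := by
    rw [show (4 : ℝ) = 2 ^ (2 : ℝ) by norm_num]
    exact Real.logb_rpow (by norm_num) (by norm_num)
  have := le_max_right ((1 / 2) * Real.logb 2 (1 + INR)) ((1 / 2) * Real.logb 2 Q)
  linarith
end

section
/- For all real S ≥ 0 and I ≥ 0, log₂(1 + S/(1+I)) + log₂(1 + S + I + 2·√(S·I)) − log₂( ((1+S+I)² − S/(1+I)) / (1+2I) ) ≤ 2. -/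
/-- The key inequality in the one-bit-gap proof for the symmetric capacity of the
Gaussian interference channel with feedback. -/
theorem outer_minus_inner_le_two (S I : ℝ) (hS : 0 ≤ S) (hI : 0 ≤ I) :
    Real.logb 2 (1 + S / (1 + I)) + Real.logb 2 (1 + S + I + 2 * Real.sqrt (S * I)) -
        Real.logb 2 (((1 + S + I) ^ 2 - S / (1 + I)) / (1 + 2 * I)) ≤ 2 := by
  have hq0 : 0 ≤ Real.sqrt (S * I) := Real.sqrt_nonneg _
  have hq : 2 * Real.sqrt (S * I) ≤ S + I := by
    have h1 := Real.sq_sqrt (mul_nonneg hS hI)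
    nlinarith [sq_nonneg (S - I)]
  generalize Real.sqrt (S * I) = q at hq0 hq ⊢
  have h1I : 0 < 1 + I := by linarith
  have h2I : 0 < 1 + 2 * I := by linarith
  have hle : S / (1 + I) ≤ S := div_le_self hS (by linarith)
  have hA : 0 < 1 + S / (1 + I) := by positivity
  have hB : 0 < 1 + S + I + 2 * q := by positivity
  have hC : 0 < (1 + S + I) ^ 2 - S / (1 + I) := by nlinarith [mul_nonneg hS hI]
  have hD : 0 < ((1 + S + I) ^ 2 - S / (1 + I)) / (1 + 2 * I) := div_pos hC h2I
  rw [← Real.logb_mul hA.ne' hB.ne', ← Real.logb_div (mul_pos hA hB).ne' hD.ne',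
    Real.logb_le_iff_le_rpow (by norm_num) (div_pos (mul_pos hA hB) hD), div_le_iff₀ hD]
  have e : (2:ℝ) ^ (2:ℝ) = 4 := by norm_num
  rw [e, ← mul_div_assoc, le_div_iff₀ h2I]
  have key : (1 + S + I) * (1 + S + I + 2 * q) * (1 + 2 * I)
      ≤ 4 * ((1 + I) * (1 + S + I) ^ 2 - S) := by
    have h : (1 + S + I) * (1 + S + I + 2 * q) * (1 + 2 * I)
        ≤ (1 + S + I) * (1 + S + I + (S + I)) * (1 + 2 * I) := by gcongr
    nlinarith [sq_nonneg (S - 1), mul_nonneg hS hI, sq_nonneg I]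
  have e1 : (1 + S / (1 + I)) * (1 + S + I + 2 * q) * (1 + 2 * I)
      = ((1 + S + I) * (1 + S + I + 2 * q) * (1 + 2 * I)) / (1 + I) := by
    field_simp
    ring
  have e2 : 4 * ((1 + S + I) ^ 2 - S / (1 + I))
      = (4 * ((1 + I) * (1 + S + I) ^ 2 - S)) / (1 + I) := by
    field_simp
  rw [e1, e2]
  gcongr
end

section
/- Fix real parameters SNR₁ ≥ 0, SNR₂ ≥ 0, INR₁₂ > 0, INR₂₁ > 0. Define the inner region R ⊆ ℝ² as the set of pairs (R₁,R₂) for which there exists ρ ∈ [0,1] with: R₁ ≤ log₂(1+SNR₁+INR₂₁+2ρ√(SNR₁·INR₂₁)) − 1; R₁ ≤ log₂(1+(1−ρ)INR₁₂) + log₂(2+SNR₁/INR₁₂) − 2; R₂ ≤ log₂(1+SNR₂+INR₁₂+2ρ√(SNR₂·INR₁₂)) − 1; R₂ ≤ log₂(1+(1−ρ)INR₂₁) + log₂(2+SNR₂/INR₂₁) − 2; R₁+R₂ ≤ log₂(2+SNR₁/INR₁₂) + log₂(1+SNR₂+INR₁₂+2ρ√(SNR₂·INR₁₂)) − 2; R₁+R₂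 ≤ log₂(2+SNR₂/INR₂₁) + log₂(1+SNR₁+INR₂₁+2ρ√(SNR₁·INR₂₁)) − 2. Define the outer region C̄ ⊆ ℝ² as the set of pairs (R₁,R₂) for which there exists ρ ∈ [0,1] with: R₁ ≤ log₂(1+SNR₁+INR₂₁+2ρ√(SNR₁·INR₂₁)); R₁ ≤ log₂(1+(1−ρ²)INR₁₂) + log₂(1+(1−ρ²)SNR₁/(1+(1−ρ²)INR₁₂)); R₂ ≤ log₂(1+SNR₂+INR₁₂+2ρ√(SNR₂·INR₁₂)); R₂ ≤ log₂(1+(1−ρ²)INR₂₁) + log₂(1+(1−ρ²)SNR₂/(1+(1−ρ²)INR₂₁)); R₁+R₂ ≤ log₂(1+(1−ρ²)SNR₁/(1+(1−ρ²)INR₁₂)) + log₂(1+SNR₂+INR₁₂+2ρ√(SNR₂·INR₁₂)); R₁+R₂ ≤ log₂(1+(1−ρ²)SNR₂/(1+(1−ρ²)INR₂₁)) + log₂(1+SNR₁+INR₂₁+2ρ√(SNR₁·INR₂₁)). Then C̄ is contained in the Minkowski sum R + ([0,2] × [0,2]); that is, for every (x,y) ∈ C̄ there exist (a,b) ∈ R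 and (e₁,e₂) ∈ [0,2]² with (x,y) = (a+e₁, b+e₂). -/
open Real Set Pointwise

theorem cr_aux1 (S I ρ : ℝ) (hS : 0 ≤ S) (hI : 0 < I) (h0 : 0 ≤ ρ) (h1 : ρ ≤ 1) :
    Real.logb 2 (1 + S + I + 2 * ρ * Real.sqrt (S * I)) ≤
      Real.logb 2 (1 + S + I + 2 * 0 * Real.sqrt (S * I)) + 1 := by
  have hq : 0 ≤ Real.sqrt (S * I) := Real.sqrt_nonneg _
  have h2 : 2 * Real.sqrt (S * I) ≤ S + I := by
    rw [Real.sqrt_mul hS]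
    nlinarith [sq_nonneg (Real.sqrt S - Real.sqrt I), Real.sq_sqrt hS, Real.sq_sqrt hI.le]
  have e : (1 : ℝ) = Real.logb 2 2 := by simp
  conv_rhs => rw [show ∀ a : ℝ, a + 1 = a + Real.logb 2 2 from fun a => by rw [← e]]
  rw [← Real.logb_mul (by positivity) (by norm_num)]
  apply Real.logb_le_logb_of_le (by norm_num) (by positivity)
  nlinarith

theorem cr_aux2 (S I t : ℝ) (hS : 0 ≤ S) (hI : 0 < I) (h0 : 0 ≤ t) :
    Real.logb 2 (1 + t * S / (1 + t * I)) ≤ Real.logb 2 (2 + S / I) := by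
  apply Real.logb_le_logb_of_le (by norm_num) (by positivity)
  have : t * S / (1 + t * I) ≤ S / I := by
    rw [div_le_div_iff₀ (by positivity) hI]
    nlinarith
  linarith

theorem cr_aux3 (I t : ℝ) (hI : 0 < I) (h0 : 0 ≤ t) (h1 : t ≤ 1) :
    Real.logb 2 (1 + t * I) ≤ Real.logb 2 (1 + (1 - 0) * I) := by
  apply Real.logb_le_logb_of_le (by norm_num) (by positivity)
  nlinarith

/-- The outer-bound region of the two-user Gaussian interference channel with feedback
is contained in the Minkowski sum of the inner (achievable) region and `[0,2] × [0,2]`: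
a 2-bit/user gap between inner and outer bounds (Theorem 4 of the paper). -/
theorem capacity_region_two_bit_gap (SNR₁ SNR₂ INR₁₂ INR₂₁ : ℝ)
    (hS₁ : 0 ≤ SNR₁) (hS₂ : 0 ≤ SNR₂) (hI₁₂ : 0 < INR₁₂) (hI₂₁ : 0 < INR₂₁) :
    {p : ℝ × ℝ | ∃ ρ ∈ Set.Icc (0 : ℝ) 1,
        p.1 ≤ Real.logb 2 (1 + SNR₁ + INR₂₁ + 2 * ρ * Real.sqrt (SNR₁ * INR₂₁)) ∧
        p.1 ≤ Real.logb 2 (1 + (1 - ρ ^ 2) * INR₁₂) +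
              Real.logb 2 (1 + (1 - ρ ^ 2) * SNR₁ / (1 + (1 - ρ ^ 2) * INR₁₂)) ∧
        p.2 ≤ Real.logb 2 (1 + SNR₂ + INR₁₂ + 2 * ρ * Real.sqrt (SNR₂ * INR₁₂)) ∧
        p.2 ≤ Real.logb 2 (1 + (1 - ρ ^ 2) * INR₂₁) +
              Real.logb 2 (1 + (1 - ρ ^ 2) * SNR₂ / (1 + (1 - ρ ^ 2) * INR₂₁)) ∧
        p.1 + p.2 ≤ Real.logb 2 (1 + (1 - ρ ^ 2) * SNR₁ / (1 + (1 - ρ ^ 2) * INR₁₂)) +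
              Real.logb 2 (1 + SNR₂ + INR₁₂ + 2 * ρ * Real.sqrt (SNR₂ * INR₁₂)) ∧
        p.1 + p.2 ≤ Real.logb 2 (1 + (1 - ρ ^ 2) * SNR₂ / (1 + (1 - ρ ^ 2) * INR₂₁)) +
              Real.logb 2 (1 + SNR₁ + INR₂₁ + 2 * ρ * Real.sqrt (SNR₁ * INR₂₁))} ⊆
      {p : ℝ × ℝ | ∃ ρ ∈ Set.Icc (0 : ℝ) 1,
        p.1 ≤ Real.logb 2 (1 + SNR₁ + INR₂₁ + 2 * ρ * Real.sqrt (SNR₁ * INR₂₁)) - 1 ∧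
        p.1 ≤ Real.logb 2 (1 + (1 - ρ) * INR₁₂) + Real.logb 2 (2 + SNR₁ / INR₁₂) - 2 ∧
        p.2 ≤ Real.logb 2 (1 + SNR₂ + INR₁₂ + 2 * ρ * Real.sqrt (SNR₂ * INR₁₂)) - 1 ∧
        p.2 ≤ Real.logb 2 (1 + (1 - ρ) * INR₂₁) + Real.logb 2 (2 + SNR₂ / INR₂₁) - 2 ∧
        p.1 + p.2 ≤ Real.logb 2 (2 + SNR₁ / INR₁₂) +
              Real.logb 2 (1 + SNR₂ + INR₁₂ + 2 * ρ * Real.sqrt (SNR₂ * INR₁₂)) - 2 ∧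
        p.1 + p.2 ≤ Real.logb 2 (2 + SNR₂ / INR₂₁) +
              Real.logb 2 (1 + SNR₁ + INR₂₁ + 2 * ρ * Real.sqrt (SNR₁ * INR₂₁)) - 2} +
      (Set.Icc (0 : ℝ) 2 ×ˢ Set.Icc (0 : ℝ) 2) := by
  rintro ⟨x, y⟩ ⟨ρ, ⟨h0, h1⟩, a1, a2, a3, a4, a5, a6⟩
  have t0 : 0 ≤ 1 - ρ ^ 2 := by nlinarith
  have t1 : 1 - ρ ^ 2 ≤ 1 := by nlinarith
  have b1 := cr_aux1 SNR₁ INR₂₁ ρ hS₁ hI₂₁ h0 h1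
  have b2 := cr_aux1 SNR₂ INR₁₂ ρ hS₂ hI₁₂ h0 h1
  have c1 := cr_aux2 SNR₁ INR₁₂ _ hS₁ hI₁₂ t0
  have c2 := cr_aux2 SNR₂ INR₂₁ _ hS₂ hI₂₁ t0
  have d1 := cr_aux3 INR₁₂ _ hI₁₂ t0 t1
  have d2 := cr_aux3 INR₂₁ _ hI₂₁ t0 t1
  dsimp only at a1 a2 a3 a4 a5 a6
  refine Set.mem_add.2 ⟨(x - 2, y - 2), ⟨0, ⟨le_rfl, zero_le_one⟩, ?_⟩, (2, 2), ?_, ?_⟩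
  · dsimp only
    generalize Real.logb 2 (1 + (1 - ρ ^ 2) * SNR₁ / (1 + (1 - ρ ^ 2) * INR₁₂)) = u1 at *
    generalize Real.logb 2 (1 + (1 - ρ ^ 2) * SNR₂ / (1 + (1 - ρ ^ 2) * INR₂₁)) = u2 at *
    generalize Real.logb 2 (2 + SNR₁ / INR₁₂) = v1 at *
    generalize Real.logb 2 (2 + SNR₂ / INR₂₁) = v2 at *
    refine ⟨?_, ?_, ?_, ?_, ?_, ?_⟩ <;> linarith
  · simp
  · simp
end

section
/- For all real S ≥ 0, I > 0, T ≥ 0 and ρ ∈ [0,1], the outer sum-rate expression at parameter ρ exceeds the inner sum-rate expression at the same ρ by at most 2 bits: log₂(1 + (1−ρ²)·S/(1 + (1−ρ²)·I)) + log₂(1 + T + I + 2ρ·√(T·I)) ≤ [ log₂(2 + S/I) + log₂(1 + T + I + 2ρ·√(T·I)) − 2 ] + 2. -/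
/-- For each fixed correlation ρ ∈ [0,1], the outer sum-rate expression exceeds the
inner sum-rate expression (at the same ρ) by at most 2 bits. -/
theorem sum_rate_two_bit_gap_fixed_rho (S I T ρ : ℝ) (hS : 0 ≤ S) (hI : 0 < I)
    (hT : 0 ≤ T) (hρ0 : 0 ≤ ρ) (hρ1 : ρ ≤ 1) :
    Real.logb 2 (1 + (1 - ρ ^ 2) * S / (1 + (1 - ρ ^ 2) * I)) +
        Real.logb 2 (1 + T + I + 2 * ρ * Real.sqrt (T * I)) ≤
      (Real.logb 2 (2 + S / I) +
          Real.logb 2 (1 + T + I + 2 * ρ * Real.sqrt (T * I)) - 2) + 2 := by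
  have ha : 0 ≤ 1 - ρ ^ 2 := by nlinarith
  have hd : 0 < 1 + (1 - ρ ^ 2) * I := by positivity
  have hq : 0 ≤ (1 - ρ ^ 2) * S / (1 + (1 - ρ ^ 2) * I) :=
    div_nonneg (mul_nonneg ha hS) hd.le
  have hle : (1 - ρ ^ 2) * S / (1 + (1 - ρ ^ 2) * I) ≤ S / I := by
    rw [div_le_div_iff₀ hd hI]
    nlinarith
  have h := Real.logb_le_logb_of_le (b := 2) (by norm_num)
    (show 0 < 1 + (1 - ρ ^ 2) * S / (1 + (1 - ρ ^ 2) * I) by linarith)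
    (show 1 + (1 - ρ ^ 2) * S / (1 + (1 - ρ ^ 2) * I) ≤ 2 + S / I by linarith)
  linarith
end

section
/- For all real S ≥ 0, I₂₁ ≥ 0 and I₁₂ > 0, sup_{ρ∈[0,1]} min( log₂(1+S+I₂₁+2ρ√(S·I₂₁)), log₂(1+(1−ρ²)I₁₂) + log₂(1+(1−ρ²)S/(1+(1−ρ²)I₁₂)) ) ≤ sup_{ρ∈[0,1]} min( log₂(1+S+I₂₁+2ρ√(S·I₂₁)) − 1, log₂(1+(1−ρ)I₁₂) + log₂(2+S/I₁₂) − 2 ) + 2. In other words, the largest R₁ permitted by the outer-bound constraints (over all ρ ∈ [0,1]) exceeds the largest R₁ permitted by the inner-bound constraints (over all ρ ∈ [0,1]) by at most 2 bits. -/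
open Real Set

/-- The largest individual rate `R₁` permitted by the outer-bound constraints exceeds
the largest `R₁` permitted by the inner-bound constraints by at most 2 bits. -/
theorem individual_rate_two_bit_gap (S I₂₁ I₁₂ : ℝ) (hS : 0 ≤ S) (hI₂₁ : 0 ≤ I₂₁)
    (hI₁₂ : 0 < I₁₂) :
    sSup ((fun ρ : ℝ =>
        min (Real.logb 2 (1 + S + I₂₁ + 2 * ρ * Real.sqrt (S * I₂₁)))
          (Real.logb 2 (1 + (1 - ρ ^ 2) * I₁₂) +
            Real.logb 2 (1 + (1 - ρ ^ 2) * S / (1 + (1 - ρ ^ 2) * I₁₂)))) ''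
        Set.Icc (0 : ℝ) 1) ≤
      sSup ((fun ρ : ℝ =>
        min (Real.logb 2 (1 + S + I₂₁ + 2 * ρ * Real.sqrt (S * I₂₁)) - 1)
          (Real.logb 2 (1 + (1 - ρ) * I₁₂) + Real.logb 2 (2 + S / I₁₂) - 2)) ''
        Set.Icc (0 : ℝ) 1) + 2 := by
  have hq : 0 ≤ Real.sqrt (S * I₂₁) := Real.sqrt_nonneg _
  have hq2 : 2 * Real.sqrt (S * I₂₁) ≤ S + I₂₁ := by
    rw [Real.sqrt_mul hS]
    nlinarith [sq_nonneg (Real.sqrt S - Real.sqrt I₂₁), Real.sq_sqrt hS, Real.sq_sqrt hI₂₁]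
  set q := Real.sqrt (S * I₂₁) with hqdef
  have hlog2 : Real.logb 2 2 = 1 := Real.logb_self_eq_one (by norm_num)
  have hb : BddAbove ((fun ρ : ℝ =>
        min (Real.logb 2 (1 + S + I₂₁ + 2 * ρ * q) - 1)
          (Real.logb 2 (1 + (1 - ρ) * I₁₂) + Real.logb 2 (2 + S / I₁₂) - 2)) ''
        Set.Icc (0 : ℝ) 1) := by
    refine ⟨Real.logb 2 (1 + S + I₂₁ + 2 * q) - 1, ?_⟩
    rintro _ ⟨ρ, ⟨h0, h1⟩, rfl⟩
    refine (min_le_left _ _).trans ?_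
    have h2 : 0 ≤ ρ * q := mul_nonneg h0 hq
    have : Real.logb 2 (1 + S + I₂₁ + 2 * ρ * q) ≤ Real.logb 2 (1 + S + I₂₁ + 2 * q) :=
      Real.logb_le_logb_of_le (by norm_num) (by nlinarith) (by nlinarith)
    linarith
  have h0 := le_csSup hb ⟨0, ⟨le_refl 0, zero_le_one⟩, rfl⟩
  refine csSup_le ⟨_, ⟨0, ⟨le_refl 0, zero_le_one⟩, rfl⟩⟩ ?_
  rintro _ ⟨ρ, ⟨hρ0, hρ1⟩, rfl⟩
  refine le_trans ?_ (add_le_add_left h0 2)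
  dsimp only
  rw [← min_add_add_right]
  refine min_le_min ?_ ?_
  · have h2 : 0 ≤ ρ * q := mul_nonneg hρ0 hq
    have h3 : Real.logb 2 (1 + S + I₂₁ + 2 * ρ * q) ≤
        Real.logb 2 (2 * (1 + S + I₂₁ + 2 * 0 * q)) :=
      Real.logb_le_logb_of_le (by norm_num) (by nlinarith) (by nlinarith)
    rw [Real.logb_mul (by norm_num) (by nlinarith), hlog2] at h3
    linarith
  · have ht0 : 0 ≤ 1 - ρ ^ 2 := by nlinarith
    have ht1 : 1 - ρ ^ 2 ≤ 1 := by nlinarith [sq_nonneg ρ]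
    generalize 1 - ρ ^ 2 = t at ht0 ht1
    have hp : 0 < 1 + t * I₁₂ := by positivity
    have hp2 : 0 < 1 + t * S / (1 + t * I₁₂) := by positivity
    have hp3 : 0 < 2 + S / I₁₂ := by positivity
    rw [← Real.logb_mul hp.ne' hp2.ne']
    rw [← Real.logb_mul (by nlinarith) hp3.ne', sub_add_cancel]
    refine Real.logb_le_logb_of_le (by norm_num) (mul_pos hp hp2) ?_
    have e1 : (1 + t * I₁₂) * (1 + t * S / (1 + t * I₁₂)) = 1 + t * I₁₂ + t * S := by
      field_simp
    have e2 : (1 + (1 - 0) * I₁₂) * (2 + S / I₁₂) = 2 + S / I₁₂ + 2 * I₁₂ + S := by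
      field_simp
      ring
    rw [e1, e2]
    have : 0 ≤ S / I₁₂ := by positivity
    nlinarith [mul_le_mul_of_nonneg_right ht1 hS, mul_le_mul_of_nonneg_right ht1 hI₁₂.le]
end

section
/- For all real S₁ ≥ 0, S₂ ≥ 0, I₁₂ > 0 and I₂₁ > 0, sup_{ρ∈[0,1]} min( log₂(1+(1−ρ²)S₁/(1+(1−ρ²)I₁₂)) + log₂(1+S₂+I₁₂+2ρ√(S₂·I₁₂)), log₂(1+(1−ρ²)S₂/(1+(1−ρ²)I₂₁)) + log₂(1+S₁+I₂₁+2ρ√(S₁·I₂₁)) ) ≤ sup_{ρ∈[0,1]} min( log₂(2+S₁/I₁₂) + log₂(1+S₂+I₁₂+2ρ√(S₂·I₁₂)) − 2, log₂(2+S₂/I₂₁) + log₂(1+S₁+I₂₁+2ρ√(S₁·I₂₁)) − 2 ) + 2. In other words, the largest sum rate R₁+R₂ permitted by the outer-bound constraints exceeds the largest sum rate permitted by the inner-bound constraints by at most 2 bits. -/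
open Real Set

lemma aux_term (S I t : ℝ) (hS : 0 ≤ S) (hI : 0 < I) (ht : 0 ≤ t) :
    Real.logb 2 (1 + t * S / (1 + t * I)) ≤ Real.logb 2 (2 + S / I) := by
  have h1 : 0 ≤ t * S / (1 + t * I) := by positivity
  have h2 : t * S / (1 + t * I) ≤ S / I := by
    rw [div_le_div_iff₀ (by positivity) hI]
    nlinarith
  exact Real.logb_le_logb_of_le (by norm_num) (by linarith) (by linarith)

/-- The largest sum rate `R₁ + R₂` permitted by the outer-bound constraints exceeds
the largest sum rate permitted by the inner-bound constraints by at most 2 bits. -/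
theorem sum_rate_two_bit_gap (S₁ S₂ I₁₂ I₂₁ : ℝ) (hS₁ : 0 ≤ S₁) (hS₂ : 0 ≤ S₂)
    (hI₁₂ : 0 < I₁₂) (hI₂₁ : 0 < I₂₁) :
    sSup ((fun ρ : ℝ =>
        min (Real.logb 2 (1 + (1 - ρ ^ 2) * S₁ / (1 + (1 - ρ ^ 2) * I₁₂)) +
              Real.logb 2 (1 + S₂ + I₁₂ + 2 * ρ * Real.sqrt (S₂ * I₁₂)))
          (Real.logb 2 (1 + (1 - ρ ^ 2) * S₂ / (1 + (1 - ρ ^ 2) * I₂₁)) +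
              Real.logb 2 (1 + S₁ + I₂₁ + 2 * ρ * Real.sqrt (S₁ * I₂₁)))) ''
        Set.Icc (0 : ℝ) 1) ≤
      sSup ((fun ρ : ℝ =>
        min (Real.logb 2 (2 + S₁ / I₁₂) +
              Real.logb 2 (1 + S₂ + I₁₂ + 2 * ρ * Real.sqrt (S₂ * I₁₂)) - 2)
          (Real.logb 2 (2 + S₂ / I₂₁) +
              Real.logb 2 (1 + S₁ + I₂₁ + 2 * ρ * Real.sqrt (S₁ * I₂₁)) - 2)) ''
        Set.Icc (0 : ℝ) 1) + 2 := by
  apply csSup_le ((Set.nonempty_Icc.2 zero_le_one).image _)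
  rintro _ ⟨ρ, ⟨h0, h1⟩, rfl⟩
  have ht : 0 ≤ 1 - ρ ^ 2 := by nlinarith
  have hA := aux_term S₁ I₁₂ _ hS₁ hI₁₂ ht
  have hB := aux_term S₂ I₂₁ _ hS₂ hI₂₁ ht
  rw [← sub_le_iff_le_add]
  refine le_trans ?_ (le_csSup ?_ (Set.mem_image_of_mem _ (Set.mem_Icc.2 ⟨h0, h1⟩)))
  · rw [sub_le_iff_le_add, ← min_add_add_right]
    exact min_le_min (by linarith) (by linarith)
  · refine ⟨Real.logb 2 (2 + S₁ / I₁₂) +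
      Real.logb 2 (1 + S₂ + I₁₂ + 2 * 1 * Real.sqrt (S₂ * I₁₂)) - 2, ?_⟩
    rintro _ ⟨r, ⟨r0, r1⟩, rfl⟩
    refine (min_le_left _ _).trans ?_
    have : Real.logb 2 (1 + S₂ + I₁₂ + 2 * r * Real.sqrt (S₂ * I₁₂)) ≤
        Real.logb 2 (1 + S₂ + I₁₂ + 2 * 1 * Real.sqrt (S₂ * I₁₂)) := by
      apply Real.logb_le_logb_of_le (by norm_num) (by positivity)
      gcongr
    exact sub_le_sub_right (add_le_add_right this _) _
end

section
/- Let 0 ≤ α < 1/3 and let ρ : (1,∞) → ℝ be a function such that for every s > 1, ρ(s) is the unique element of [0,1] satisfying 2·s^{(3α+1)/2}·ρ(s)⁴ + s^α·ρ(s)³ − 4·(s^{(3α+1)/2} + s^{(α+1)/2})·ρ(s)² − (2 + s + 2·s^α)·ρ(s) + 2·(s^{(3α+1)/2} + s^{(α+1)/2}) = 0. Define R(s) = log₂( (1 + s + s^α + 2·ρ(s)·s^{(α+1)/2}) / (1 + (1−ρ(s)²)·s^α) ). Then R(s)/log₂(s) tends to 1 − α as s → ∞. -/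
open Real Filter

/-- Generalized degrees-of-freedom of Kramer's feedback scheme for `0 ≤ α < 1/3`. -/
theorem kramer_gdof_low (α : ℝ) (hα0 : 0 ≤ α) (hα1 : α < 1 / 3) (ρ : ℝ → ℝ)
    (hρ : ∀ s : ℝ, 1 < s →
      ρ s ∈ Set.Icc (0 : ℝ) 1 ∧
      (2 * s ^ ((3 * α + 1) / 2) * ρ s ^ 4 + s ^ α * ρ s ^ 3 -
          4 * (s ^ ((3 * α + 1) / 2) + s ^ ((α + 1) / 2)) * ρ s ^ 2 -
          (2 + s + 2 * s ^ α) * ρ s +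
          2 * (s ^ ((3 * α + 1) / 2) + s ^ ((α + 1) / 2)) = 0) ∧
      ∀ r ∈ Set.Icc (0 : ℝ) 1,
        2 * s ^ ((3 * α + 1) / 2) * r ^ 4 + s ^ α * r ^ 3 -
            4 * (s ^ ((3 * α + 1) / 2) + s ^ ((α + 1) / 2)) * r ^ 2 -
            (2 + s + 2 * s ^ α) * r +
            2 * (s ^ ((3 * α + 1) / 2) + s ^ ((α + 1) / 2)) = 0 → r = ρ s) :
    Tendsto (fun s : ℝ =>
        Real.logb 2 ((1 + s + s ^ α + 2 * ρ s * s ^ ((α + 1) / 2)) /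
            (1 + (1 - ρ s ^ 2) * s ^ α)) / Real.logb 2 s)
      atTop (nhds (1 - α)) := by
  have hL : Tendsto (fun s : ℝ => Real.logb 2 s) atTop atTop :=
    Real.tendsto_logb_atTop (by norm_num)
  have h1 : Tendsto (fun s : ℝ => (1 - α) - 1 / Real.logb 2 s) atTop (nhds (1 - α)) := by
    simpa using tendsto_const_nhds.sub (hL.const_div_atTop 1)
  have h2 : Tendsto (fun s : ℝ => (1 - α) + 3 / Real.logb 2 s) atTop (nhds (1 - α)) := by
    simpa using tendsto_const_nhds.add (hL.const_div_atTop 3)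
  have hS : Tendsto (fun s : ℝ => s ^ ((1 - 3 * α) / 2)) atTop atTop :=
    tendsto_rpow_atTop (by linarith)
  have key : ∀ᶠ s : ℝ in atTop,
      (1 - α) * Real.logb 2 s - 1 ≤ Real.logb 2 ((1 + s + s ^ α + 2 * ρ s * s ^ ((α + 1) / 2)) /
            (1 + (1 - ρ s ^ 2) * s ^ α)) ∧
      Real.logb 2 ((1 + s + s ^ α + 2 * ρ s * s ^ ((α + 1) / 2)) /
            (1 + (1 - ρ s ^ 2) * s ^ α)) ≤ (1 - α) * Real.logb 2 s + 3 := by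
    filter_upwards [hS.eventually_ge_atTop 8, eventually_gt_atTop 1] with s hs8 hs
    obtain ⟨⟨hr0, hr1⟩, heq, -⟩ := hρ s hs
    have hs0 : 0 < s := by linarith
    have hprod : s ^ ((3 * α + 1) / 2) * s ^ ((1 - 3 * α) / 2) = s := by
      rw [← Real.rpow_add hs0]
      conv_rhs => rw [← Real.rpow_one s]
      congr 1; ring
    have hprod2 : s ^ (1 - α) * s ^ α = s := by
      rw [← Real.rpow_add hs0]
      conv_rhs => rw [← Real.rpow_one s]
      congr 1; ring
    have hlogp : Real.logb 2 (s ^ (1 - α)) = (1 - α) * Real.logb 2 s :=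
      Real.logb_rpow_eq_mul_logb_of_pos hs0
    have hBA : s ^ ((α + 1) / 2) ≤ s ^ ((3 * α + 1) / 2) :=
      Real.rpow_le_rpow_of_exponent_le hs.le (by linarith)
    have hBs : s ^ ((α + 1) / 2) ≤ s := by
      conv_rhs => rw [← Real.rpow_one s]
      exact Real.rpow_le_rpow_of_exponent_le hs.le (by linarith)
    have has : s ^ α ≤ s := by
      conv_rhs => rw [← Real.rpow_one s]
      exact Real.rpow_le_rpow_of_exponent_le hs.le (by linarith)
    have ha1 : 1 ≤ s ^ α := Real.one_le_rpow hs.le hα0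
    have hB0 : 0 < s ^ ((α + 1) / 2) := Real.rpow_pos_of_pos hs0 _
    have hA0 : 0 < s ^ ((3 * α + 1) / 2) := Real.rpow_pos_of_pos hs0 _
    have hP0 : 0 < s ^ (1 - α) := Real.rpow_pos_of_pos hs0 _
    rw [← hlogp]
    generalize s ^ ((3 * α + 1) / 2) = A at *
    generalize s ^ ((α + 1) / 2) = B at *
    generalize s ^ (1 - α) = P at *
    generalize s ^ ((1 - 3 * α) / 2) = Q at *
    generalize s ^ α = a at *
    generalize ρ s = r at *
    have hr2 : r ^ 2 ≤ 1 := pow_le_one₀ hr0 hr1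
    have hr4 : r ^ 4 ≤ r ^ 2 := pow_le_pow_of_le_one hr0 hr1 (by norm_num)
    have hr3 : r ^ 3 ≤ r := pow_le_of_le_one hr0 hr1 (by norm_num)
    have e1 : A * r ^ 4 ≤ A * r ^ 2 := mul_le_mul_of_nonneg_left hr4 hA0.le
    have e2 : a * r ^ 3 ≤ a * r := mul_le_mul_of_nonneg_left hr3 (by linarith)
    have e3 : 0 ≤ A * r ^ 2 := by positivity
    have e4 : 0 ≤ B * r ^ 2 := by positivity
    have e5 : 0 ≤ a * r := mul_nonneg (by linarith) hr0
    have e6 : s * r ≤ 4 * A := by linarith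
    have e7 : A * 8 ≤ s := by rw [← hprod]; exact mul_le_mul_of_nonneg_left hs8 hA0.le
    have e8 : r ≤ 1 / 2 := by
      by_contra hc
      push Not at hc
      have := mul_lt_mul_of_pos_left hc hs0
      linarith
    have hrB : r * B ≤ s := (mul_le_of_le_one_left hB0.le hr1).trans hBs
    have hrB0 : 0 ≤ r * B := by positivity
    have hr14 : r ^ 2 ≤ 1 / 4 := by
      have := pow_le_pow_left₀ hr0 e8 2
      linarith
    have f1 : 3 / 4 * a ≤ (1 - r ^ 2) * a :=
      mul_le_mul_of_nonneg_right (by linarith) (by linarith)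
    have f2 : (1 - r ^ 2) * a ≤ a :=
      mul_le_of_le_one_left (by linarith) (by linarith [sq_nonneg r])
    have hD : 0 < 1 + (1 - r ^ 2) * a := by linarith
    have g1 : P / 2 ≤ (1 + s + a + 2 * r * B) / (1 + (1 - r ^ 2) * a) := by
      rw [le_div_iff₀ hD]
      have := mul_le_mul_of_nonneg_left (show 1 + (1 - r ^ 2) * a ≤ 2 * a by linarith) hP0.le
      linarith
    have g2 : (1 + s + a + 2 * r * B) / (1 + (1 - r ^ 2) * a) ≤ P * 8 := by
      rw [div_le_iff₀ hD]
      have := mul_le_mul_of_nonneg_left (show 3 / 4 * a ≤ 1 + (1 - r ^ 2) * a by linarith) hP0.le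
      linarith
    have l1 := Real.logb_le_logb_of_le (b := 2) (by norm_num) (by positivity) g1
    have l2 := Real.logb_le_logb_of_le (b := 2) (by norm_num) (lt_of_lt_of_le (by positivity) g1) g2
    rw [Real.logb_div hP0.ne' (by norm_num), Real.logb_self_eq_one (by norm_num)] at l1
    have h8 : Real.logb 2 8 = 3 := by
      rw [show (8 : ℝ) = 2 ^ (3 : ℝ) by norm_num]
      exact Real.logb_rpow (by norm_num) (by norm_num)
    rw [Real.logb_mul hP0.ne' (by norm_num), h8] at l2
    exact ⟨l1, l2⟩
  refine tendsto_of_tendsto_of_tendsto_of_le_of_le' h1 h2 ?_ ?_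
  · filter_upwards [key, hL.eventually_gt_atTop 0] with s hs h0
    rw [le_div_iff₀ h0, sub_mul, div_mul_cancel₀ _ h0.ne']
    exact hs.1
  · filter_upwards [key, hL.eventually_gt_atTop 0] with s hs h0
    rw [div_le_iff₀ h0, add_mul, div_mul_cancel₀ _ h0.ne']
    exact hs.2
end

section
/- Let 1/3 ≤ α < 1 and let ρ : (1,∞) → ℝ be a function such that for every s > 1, ρ(s) is the unique element of [0,1] satisfying 2·s^{(3α+1)/2}·ρ(s)⁴ + s^α·ρ(s)³ − 4·(s^{(3α+1)/2} + s^{(α+1)/2})·ρ(s)² − (2 + s + 2·s^α)·ρ(s) + 2·(s^{(3α+1)/2} + s^{(α+1)/2}) = 0. Define R(s) = log₂( (1 + s + s^α + 2·ρ(s)·s^{(α+1)/2}) / (1 + (1−ρ(s)²)·s^α) ). Then R(s)/log₂(s) tends to (3 − α)/4 as s → ∞. -/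
open Real Filter

set_option maxHeartbeats 1000000 in
theorem kramer_aux (s B C r : ℝ) (hs : 1 < s) (hB : 1 ≤ B) (hBs : B ≤ s) (hC : 1 ≤ C) (hCs : C ≤ s)
    (hBC : B * B = s * C) (hBC2 : B ≤ C ^ 2) (hr0 : 0 ≤ r) (hr1 : r ≤ 1)
    (h : 2 * (B * C) * r ^ 4 + C * r ^ 3 - 4 * (B * C + B) * r ^ 2 -
          (2 + s + 2 * C) * r + 2 * (B * C + B) = 0) :
    0 < (1 + s + C + 2 * r * B) / (1 + (1 - r ^ 2) * C) ∧
    1 / 9 * (s ^ 2 / B) ≤ ((1 + s + C + 2 * r * B) / (1 + (1 - r ^ 2) * C)) ^ 2 ∧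
    ((1 + s + C + 2 * r * B) / (1 + (1 - r ^ 2) * C)) ^ 2 ≤ 100 * (s ^ 2 / B) := by
  have hu0 : 0 ≤ 1 - r ^ 2 := by nlinarith
  have hB0 : 0 < B := by linarith
  have hC0 : 0 < C := by linarith
  have hr21 : r ^ 2 ≤ 1 := by linarith
  obtain ⟨u, hu⟩ : ∃ u, u = 1 - r ^ 2 := ⟨_, rfl⟩
  have key : 2 * (B * C) * u ^ 2 + 4 * B * u = r * (2 + s + 2 * C - C * r ^ 2) + 2 * B := by
    subst hu; linarith
  rw [← hu] at hu0 ⊢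
  have hrB : r * B ≤ B := by nlinarith
  have hrB0 : 0 ≤ r * B := by positivity
  have huC : 0 ≤ u * C := by positivity
  have hD : 0 < 1 + u * C := by positivity
  have hN1 : s ≤ 1 + s + C + 2 * r * B := by nlinarith
  have hN2 : 1 + s + C + 2 * r * B ≤ 6 * s / (6/5) := by nlinarith
  have hCr : C * r ^ 2 ≤ C := by nlinarith
  have hCr0 : 0 ≤ C * r ^ 2 := by positivity
  have hup : (1 + u * C) ^ 2 ≤ 9 * B := by
    have h1 : r * (2 + s + 2 * C - C * r ^ 2) ≤ 2 + s + 2 * C - C * r ^ 2 := by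
      nlinarith
    have h2 : 2 * (B * C) * u ^ 2 ≤ 7 * s := by
      have : 0 ≤ B * u := by positivity
      linarith
    have h3 : (u * C) ^ 2 ≤ 7 / 2 * B := by
      have : B * (2 * (u * C) ^ 2) ≤ B * (7 * B) := by
        calc B * (2 * (u * C) ^ 2) = C * (2 * (B * C) * u ^ 2) := by ring
          _ ≤ C * (7 * s) := by gcongr
          _ = B * (7 * B) := by linarith
      linarith [le_of_mul_le_mul_left this hB0]
    nlinarith [sq_nonneg (1 - u * C)]
  have hlo : B / 4 ≤ (1 + u * C) ^ 2 := by
    rcases le_total (1 / 2) r with hr | hr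
    · have h1 : s / 2 ≤ r * (2 + s + 2 * C - C * r ^ 2) := by nlinarith
      have h2 : s / 2 ≤ 2 * (B * C) * u ^ 2 + 4 * B * u := by linarith
      have h3 : B * (B / 2) ≤ B * (2 * (1 + u * C) ^ 2) := by
        calc B * (B / 2) = C * (s / 2) := by linarith
          _ ≤ C * (2 * (B * C) * u ^ 2 + 4 * B * u) := by gcongr
          _ ≤ B * (2 * (1 + u * C) ^ 2) := by nlinarith
      linarith [le_of_mul_le_mul_left h3 hB0]
    · have h1 : 3 / 4 ≤ u := by rw [hu]; nlinarith
      have h2 : 3 / 4 * C ≤ u * C := by gcongr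
      have h3 : (3 / 4 * C) ^ 2 ≤ (1 + u * C) ^ 2 := by
        apply pow_le_pow_left₀ (by positivity)
        linarith
      have h4 : (3 / 4 * C) ^ 2 = 9 / 16 * C ^ 2 := by ring
      linarith
  have hs0 : 0 < s := by linarith
  refine ⟨div_pos (by linarith) hD, ?_, ?_⟩
  · rw [div_pow, show 1 / 9 * (s ^ 2 / B) = s ^ 2 / (9 * B) by field_simp]
    gcongr
  · rw [div_pow, show 100 * (s ^ 2 / B) = (5 * s) ^ 2 / (B / 4) by field_simp; ring]
    gcongr
    linarith

/-- Generalized degrees-of-freedom of Kramer's feedback scheme for `1/3 ≤ α < 1`. -/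
theorem kramer_gdof_mid (α : ℝ) (hα0 : 1 / 3 ≤ α) (hα1 : α < 1) (ρ : ℝ → ℝ)
    (hρ : ∀ s : ℝ, 1 < s →
      ρ s ∈ Set.Icc (0 : ℝ) 1 ∧
      (2 * s ^ ((3 * α + 1) / 2) * ρ s ^ 4 + s ^ α * ρ s ^ 3 -
          4 * (s ^ ((3 * α + 1) / 2) + s ^ ((α + 1) / 2)) * ρ s ^ 2 -
          (2 + s + 2 * s ^ α) * ρ s +
          2 * (s ^ ((3 * α + 1) / 2) + s ^ ((α + 1) / 2)) = 0) ∧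
      ∀ r ∈ Set.Icc (0 : ℝ) 1,
        2 * s ^ ((3 * α + 1) / 2) * r ^ 4 + s ^ α * r ^ 3 -
            4 * (s ^ ((3 * α + 1) / 2) + s ^ ((α + 1) / 2)) * r ^ 2 -
            (2 + s + 2 * s ^ α) * r +
            2 * (s ^ ((3 * α + 1) / 2) + s ^ ((α + 1) / 2)) = 0 → r = ρ s) :
    Tendsto (fun s : ℝ =>
        Real.logb 2 ((1 + s + s ^ α + 2 * ρ s * s ^ ((α + 1) / 2)) /
            (1 + (1 - ρ s ^ 2) * s ^ α)) / Real.logb 2 s)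
      atTop (nhds ((3 - α) / 4)) := by
  have hT : Tendsto (fun s : ℝ => Real.logb 2 s) atTop atTop :=
    Real.tendsto_logb_atTop (by norm_num)
  have hc : ∀ c : ℝ, Tendsto (fun s : ℝ => (3 - α) / 4 + c / Real.logb 2 s) atTop
      (nhds ((3 - α) / 4)) := by
    intro c
    simpa using (tendsto_const_nhds (x := (3 - α) / 4)).add
      ((tendsto_const_nhds (x := c)).div_atTop hT)
  have hb : ∀ s : ℝ, 1 < s →
      (3 - α) / 4 + (Real.logb 2 (1 / 9) / 2) / Real.logb 2 s ≤
        Real.logb 2 ((1 + s + s ^ α + 2 * ρ s * s ^ ((α + 1) / 2)) /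
            (1 + (1 - ρ s ^ 2) * s ^ α)) / Real.logb 2 s ∧
      Real.logb 2 ((1 + s + s ^ α + 2 * ρ s * s ^ ((α + 1) / 2)) /
            (1 + (1 - ρ s ^ 2) * s ^ α)) / Real.logb 2 s ≤
        (3 - α) / 4 + (Real.logb 2 100 / 2) / Real.logb 2 s := by
    intro s hs
    obtain ⟨⟨h0, h1⟩, h2, -⟩ := hρ s hs
    have hs0 : 0 < s := by linarith
    have hL : 0 < Real.logb 2 s := Real.logb_pos (by norm_num) hs
    have hA : s ^ ((3 * α + 1) / 2) = s ^ ((α + 1) / 2) * s ^ α := by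
      rw [← Real.rpow_add hs0]; congr 1; ring
    rw [hA] at h2
    have hBle : s ^ ((α + 1) / 2) ≤ s := by
      conv_rhs => rw [← Real.rpow_one s]
      exact Real.rpow_le_rpow_of_exponent_le hs.le (by linarith)
    have hCle : s ^ α ≤ s := by
      conv_rhs => rw [← Real.rpow_one s]
      exact Real.rpow_le_rpow_of_exponent_le hs.le (by linarith)
    have hBB : s ^ ((α + 1) / 2) * s ^ ((α + 1) / 2) = s * s ^ α := by
      rw [← Real.rpow_add hs0, ← Real.rpow_one_add' hs0.le (by linarith)]; congr 1; ring
    have hBC : s ^ ((α + 1) / 2) ≤ (s ^ α) ^ 2 := by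
      rw [← Real.rpow_mul_natCast hs0.le]
      exact Real.rpow_le_rpow_of_exponent_le hs.le (by push_cast; linarith)
    obtain ⟨hp, hl, hu⟩ := kramer_aux s _ _ (ρ s) hs
      (Real.one_le_rpow hs.le (by linarith)) hBle
      (Real.one_le_rpow hs.le (by linarith)) hCle hBB hBC h0 h1 h2
    have hE : s ^ 2 / s ^ ((α + 1) / 2) = s ^ ((3 - α) / 2) := by
      rw [← Real.rpow_natCast, ← Real.rpow_sub hs0]; congr 1; push_cast; ring
    rw [hE] at hl hu
    generalize (1 + s + s ^ α + 2 * ρ s * s ^ ((α + 1) / 2)) /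
            (1 + (1 - ρ s ^ 2) * s ^ α) = Q at *
    have hEp : 0 < s ^ ((3 - α) / 2) := Real.rpow_pos_of_pos hs0 _
    have hl' := Real.logb_le_logb_of_le (b := 2) (by norm_num) (by positivity) hl
    have hu' := Real.logb_le_logb_of_le (b := 2) (by norm_num) (by positivity) hu
    rw [Real.logb_mul (by norm_num) hEp.ne', Real.logb_rpow_eq_mul_logb_of_pos hs0,
      Real.logb_pow] at hl' hu'
    push_cast at hl' hu'
    constructor
    · rw [le_div_iff₀ hL, add_mul, div_mul_cancel₀ _ hL.ne']; linarith
    · rw [div_le_iff₀ hL, add_mul, div_mul_cancel₀ _ hL.ne']; linarith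
  refine tendsto_of_tendsto_of_tendsto_of_le_of_le' (hc (Real.logb 2 (1 / 9) / 2))
    (hc (Real.logb 2 100 / 2)) ?_ ?_
  · filter_upwards [eventually_gt_atTop 1] with s hs using (hb s hs).1
  · filter_upwards [eventually_gt_atTop 1] with s hs using (hb s hs).2
end

section
/- Let α ≥ 1 and let ρ : (1,∞) → ℝ be a function such that for every s > 1, ρ(s) is the unique element of [0,1] satisfying 2·s^{(3α+1)/2}·ρ(s)⁴ + s^α·ρ(s)³ − 4·(s^{(3α+1)/2} + s^{(α+1)/2})·ρ(s)² − (2 + s + 2·s^α)·ρ(s) + 2·(s^{(3α+1)/2} + s^{(α+1)/2}) = 0. Define R(s) = log₂( (1 + s + s^α + 2·ρ(s)·s^{(α+1)/2}) / (1 + (1−ρ(s)²)·s^α) ). Then R(s)/log₂(s) tends to (1 + α)/4 as s → ∞. -/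
open Real Filter

theorem kramer_aux_s9 (s I B w r : ℝ) (hs : 1 < s) (hsI : s ≤ I) (hBI : B ≤ I) (hwI : w ≤ I)
    (hwB : B = w ^ 2) (hw : 8 ≤ w) (h0 : 0 ≤ r) (h1 : r ≤ 1)
    (h : 2 * (I * B) * r ^ 4 + I * r ^ 3 - 4 * (I * B + B) * r ^ 2 - (2 + s + 2 * I) * r
      + 2 * (I * B + B) = 0) :
    w / 3 ≤ (1 + s + I + 2 * r * B) / (1 + (1 - r ^ 2) * I) ∧
    (1 + s + I + 2 * r * B) / (1 + (1 - r ^ 2) * I) ≤ 10 * w := by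
  obtain ⟨u, hu⟩ : ∃ u, u = 1 - r ^ 2 := ⟨_, rfl⟩
  have hI : 0 < I := by linarith
  have hB : 64 ≤ B := by nlinarith
  have hu0 : 0 ≤ u := by nlinarith
  have hu1 : u ≤ 1 := by nlinarith
  have e : 2 * (I * B) * u ^ 2 + 4 * B * u = 2 * B + (2 + s + I) * r + I * r * u := by
    subst hu; linear_combination h
  have hru : r * u ≤ 1 := by nlinarith
  have up : B * u ^ 2 ≤ 4 := by
    have a1 : (2 + s + I) * r ≤ 2 + s + I := mul_le_of_le_one_right (by linarith) h1
    have a2 : I * r * u ≤ I := by nlinarith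
    have a3 : 0 ≤ 4 * B * u := by positivity
    have : I * (B * u ^ 2) ≤ I * 4 := by nlinarith
    exact le_of_mul_le_mul_left this hI
  have uw : w * u ≤ 2 := by
    refine (pow_le_pow_iff_left₀ (by positivity) (by positivity) two_ne_zero).1 ?_
    rw [mul_pow, ← hwB]; linarith
  have u4 : u ≤ 1 / 4 := by nlinarith
  have hr : 1 / 2 ≤ r := by nlinarith
  have lo : 1 / 4 ≤ B * u ^ 2 := by
    have a1 : I * (1 / 2) ≤ (2 + s + I) * r := by nlinarith
    have a2 : 0 ≤ I * r * u := by positivity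
    have a3 : 4 * B * u ≤ B := by nlinarith
    have : I * (1 / 4) ≤ I * (B * u ^ 2) := by nlinarith
    exact le_of_mul_le_mul_left this hI
  have lw : 1 / 2 ≤ w * u := by
    refine (pow_le_pow_iff_left₀ (by positivity) (by positivity) two_ne_zero).1 ?_
    rw [mul_pow, ← hwB]; linarith
  rw [← hu]
  have hD : 0 < 1 + u * I := by positivity
  have hrB : 0 ≤ r * B := by positivity
  have hrB' : r * B ≤ B := mul_le_of_le_one_left (by linarith) h1
  have k1 : w * u * I ≤ 2 * I := mul_le_mul_of_nonneg_right uw hI.le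
  have k2 : 1 / 2 * I ≤ w * u * I := mul_le_mul_of_nonneg_right lw hI.le
  constructor
  · rw [le_div_iff₀ hD]; nlinarith
  · rw [div_le_iff₀ hD]; nlinarith

/-- Generalized degrees-of-freedom of Kramer's feedback scheme for `α ≥ 1`. -/
theorem kramer_gdof_high (α : ℝ) (hα : 1 ≤ α) (ρ : ℝ → ℝ)
    (hρ : ∀ s : ℝ, 1 < s →
      ρ s ∈ Set.Icc (0 : ℝ) 1 ∧
      (2 * s ^ ((3 * α + 1) / 2) * ρ s ^ 4 + s ^ α * ρ s ^ 3 -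
          4 * (s ^ ((3 * α + 1) / 2) + s ^ ((α + 1) / 2)) * ρ s ^ 2 -
          (2 + s + 2 * s ^ α) * ρ s +
          2 * (s ^ ((3 * α + 1) / 2) + s ^ ((α + 1) / 2)) = 0) ∧
      ∀ r ∈ Set.Icc (0 : ℝ) 1,
        2 * s ^ ((3 * α + 1) / 2) * r ^ 4 + s ^ α * r ^ 3 -
            4 * (s ^ ((3 * α + 1) / 2) + s ^ ((α + 1) / 2)) * r ^ 2 -
            (2 + s + 2 * s ^ α) * r +
            2 * (s ^ ((3 * α + 1) / 2) + s ^ ((α + 1) / 2)) = 0 → r = ρ s) :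
    Tendsto (fun s : ℝ =>
        Real.logb 2 ((1 + s + s ^ α + 2 * ρ s * s ^ ((α + 1) / 2)) /
            (1 + (1 - ρ s ^ 2) * s ^ α)) / Real.logb 2 s)
      atTop (nhds ((1 + α) / 4)) := by
  have hlog : Tendsto (fun s : ℝ => Real.logb 2 s) atTop atTop :=
    Real.tendsto_logb_atTop (by norm_num)
  have lim : ∀ c : ℝ, Tendsto (fun s : ℝ => c / Real.logb 2 s + (1 + α) / 4) atTop
      (nhds ((1 + α) / 4)) := by
    intro c
    simpa using (hlog.const_div_atTop c).add_const ((1 + α) / 4)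
  have key : ∀ᶠ s : ℝ in atTop, 1 < s ∧ 8 ≤ s ^ ((1 + α) / 4) :=
    (eventually_gt_atTop 1).and
      ((tendsto_rpow_atTop (by linarith : 0 < (1 + α) / 4)).eventually_ge_atTop 8)
  have key2 : ∀ᶠ s : ℝ in atTop, 1 < s ∧ 
      (s ^ ((1 + α) / 4) / 3 ≤ (1 + s + s ^ α + 2 * ρ s * s ^ ((α + 1) / 2)) /
            (1 + (1 - ρ s ^ 2) * s ^ α) ∧
      (1 + s + s ^ α + 2 * ρ s * s ^ ((α + 1) / 2)) /
            (1 + (1 - ρ s ^ 2) * s ^ α) ≤ 10 * s ^ ((1 + α) / 4)) := by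
    filter_upwards [key] with s ⟨hs, hw⟩
    obtain ⟨⟨h0, h1⟩, h, -⟩ := hρ s hs
    have hs0 : 0 < s := by linarith
    have hA : s ^ ((3 * α + 1) / 2) = s ^ α * s ^ ((α + 1) / 2) := by
      rw [← Real.rpow_add hs0]; congr 1; ring
    rw [hA] at h
    refine ⟨hs, kramer_aux_s9 s _ _ _ (ρ s) hs ?_ ?_ ?_ ?_ hw h0 h1 h⟩
    · exact Real.self_le_rpow_of_one_le hs.le hα
    · exact Real.rpow_le_rpow_of_exponent_le hs.le (by linarith)
    · exact Real.rpow_le_rpow_of_exponent_le hs.le (by linarith)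
    · rw [← Real.rpow_natCast, ← Real.rpow_mul hs0.le]; congr 1; push_cast; ring
  refine tendsto_of_tendsto_of_tendsto_of_le_of_le' (lim (-Real.logb 2 3)) (lim (Real.logb 2 10)) ?_ ?_
  · filter_upwards [key2] with s ⟨hs, hl, _⟩
    have hs0 : 0 < s := by linarith
    have hp : 0 < s ^ ((1 + α) / 4) := Real.rpow_pos_of_pos hs0 _
    have hL : 0 < Real.logb 2 s := Real.logb_pos (by norm_num) hs
    have := Real.logb_le_logb_of_le (b := 2) (by norm_num) (by positivity) hl
    rw [Real.logb_div hp.ne' (by norm_num), Real.logb_rpow_eq_mul_logb_of_pos hs0] at this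
    rw [le_div_iff₀ hL, add_mul, div_mul_cancel₀ _ hL.ne']
    linarith
  · filter_upwards [key2] with s ⟨hs, hl, hr⟩
    have hs0 : 0 < s := by linarith
    have hp : 0 < s ^ ((1 + α) / 4) := Real.rpow_pos_of_pos hs0 _
    have hL : 0 < Real.logb 2 s := Real.logb_pos (by norm_num) hs
    have := Real.logb_le_logb_of_le (b := 2) (by norm_num) (lt_of_lt_of_le (by positivity) hl) hr
    rw [Real.logb_mul (by norm_num) hp.ne', Real.logb_rpow_eq_mul_logb_of_pos hs0] at this
    rw [div_le_iff₀ hL, add_mul, div_mul_cancel₀ _ hL.ne']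
    linarith
end

section
/- Let α ≥ 0. Define for s > 1 the symmetric achievable feedback rate R_sym(s, s^α) = max( (1/2)·log₂(1 + s^α), (1/2)·log₂( ((1 + s + s^α)² − s/(1+s^α)) / (1 + 2·s^α) ) ). Then R_sym(s, s^α)/log₂(s) tends to max(α/2, 1 − α/2) as s → ∞. -/
open Real Filter

lemma gdof_aux (f : ℝ → ℝ) (β c C : ℝ) (hc : 0 < c) (hC : 0 < C)
    (h1 : ∀ s : ℝ, 1 < s → c * s ^ β ≤ f s) (h2 : ∀ s : ℝ, 1 < s → f s ≤ C * s ^ β) :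
    Tendsto (fun s : ℝ => Real.logb 2 (f s) / Real.logb 2 s) atTop (nhds β) := by
  have hl : Tendsto (fun s : ℝ => Real.logb 2 s) atTop atTop :=
    Real.tendsto_logb_atTop (by norm_num)
  have key : ∀ k : ℝ, Tendsto (fun s : ℝ => Real.logb 2 k / Real.logb 2 s + β) atTop (nhds β) := by
    intro k
    simpa using (hl.const_div_atTop (Real.logb 2 k)).add_const β
  have e : ∀ k : ℝ, 0 < k → ∀ s : ℝ, 1 < s →
      Real.logb 2 k / Real.logb 2 s + β = Real.logb 2 (k * s ^ β) / Real.logb 2 s := by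
    intro k hk s hs
    have hs0 : 0 < s := by linarith
    have : 0 < Real.logb 2 s := Real.logb_pos (by norm_num) hs
    rw [Real.logb_mul hk.ne' (Real.rpow_pos_of_pos hs0 _).ne', Real.logb_rpow_eq_mul_logb_of_pos hs0]
    field_simp
  refine tendsto_of_tendsto_of_tendsto_of_le_of_le' (key c) (key C) ?_ ?_
  · filter_upwards [eventually_gt_atTop 1] with s hs
    have hs0 : 0 < s := by linarith
    have hp := Real.rpow_pos_of_pos hs0 β
    have : 0 < Real.logb 2 s := Real.logb_pos (by norm_num) hs
    rw [e c hc s hs]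
    exact div_le_div_of_nonneg_right
      (Real.logb_le_logb_of_le (by norm_num) (by positivity) (h1 s hs)) this.le
  · filter_upwards [eventually_gt_atTop 1] with s hs
    have hs0 : 0 < s := by linarith
    have hp := Real.rpow_pos_of_pos hs0 β
    have : 0 < Real.logb 2 s := Real.logb_pos (by norm_num) hs
    rw [e C hC s hs]
    exact div_le_div_of_nonneg_right
      (Real.logb_le_logb_of_le (by norm_num) (lt_of_lt_of_le (by positivity) (h1 s hs)) (h2 s hs))
      this.le

lemma gdof_bd (α : ℝ) (hα : 0 ≤ α) (s : ℝ) (hs : 1 < s) :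
    (1 / 6) * s ^ (2 * max 1 α - α) ≤ ((1 + s + s ^ α) ^ 2 - s / (1 + s ^ α)) / (1 + 2 * s ^ α) ∧
    ((1 + s + s ^ α) ^ 2 - s / (1 + s ^ α)) / (1 + 2 * s ^ α) ≤ 9 * s ^ (2 * max 1 α - α) := by
  have hs0 : 0 < s := by linarith
  have ha : 1 ≤ s ^ α := Real.one_le_rpow hs.le hα
  have e : s ^ (2 * max 1 α - α) = (s ^ max 1 α) ^ 2 / s ^ α := by
    rw [Real.rpow_sub hs0, two_mul, Real.rpow_add hs0, sq]
  have hm1 : s ≤ s ^ max 1 α := by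
    simpa using Real.rpow_le_rpow_of_exponent_le hs.le (le_max_left 1 α)
  have hm2 : s ^ α ≤ s ^ max 1 α := Real.rpow_le_rpow_of_exponent_le hs.le (le_max_right 1 α)
  have hm3 : s ^ max 1 α ≤ 1 + s + s ^ α := by
    rcases max_choice 1 α with h | h <;> rw [h]
    · rw [Real.rpow_one]; linarith
    · linarith
  rw [e]
  generalize s ^ max 1 α = M at *
  generalize s ^ α = a at *
  have hd1 : s / (1 + a) ≤ s := div_le_self hs0.le (by linarith)
  have hd0 : 0 ≤ s / (1 + a) := by positivity
  generalize s / (1 + a) = d at *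
  have hM : 0 < M := by linarith
  have l1 : M ^ 2 ≤ (1 + s + a) ^ 2 := by gcongr
  have l2 : (1 + s + a) ^ 2 ≤ (3 * M) ^ 2 := by gcongr; linarith
  have l3 : 2 * s ≤ (1 + s + a) ^ 2 := by nlinarith
  have ha0 : 0 < a := by linarith
  constructor
  · calc 1 / 6 * (M ^ 2 / a) = (M ^ 2 / 2) / (3 * a) := by field_simp; norm_num
      _ ≤ _ := by
        apply div_le_div₀ <;> nlinarith
  · calc _ ≤ (9 * M ^ 2) / a := by
          apply div_le_div₀ <;> nlinarith
      _ = _ := by ring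

/-- Generalized degrees-of-freedom of the symmetric achievable feedback rate:
the "V curve" `max(α/2, 1 − α/2)`. -/
theorem achievable_gdof (α : ℝ) (hα : 0 ≤ α) :
    Tendsto (fun s : ℝ =>
        max ((1 / 2) * Real.logb 2 (1 + s ^ α))
          ((1 / 2) * Real.logb 2 (((1 + s + s ^ α) ^ 2 - s / (1 + s ^ α)) /
              (1 + 2 * s ^ α))) / Real.logb 2 s)
      atTop (nhds (max (α / 2) (1 - α / 2))) := by
  have t1 := gdof_aux (fun s => 1 + s ^ α) α 1 2 (by norm_num) (by norm_num)
    (fun s hs => by linarith) (fun s hs => by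
      have ha : 1 ≤ s ^ α := Real.one_le_rpow hs.le hα
      linarith)
  have t2 := gdof_aux _ _ (1 / 6) 9 (by norm_num) (by norm_num)
    (fun s hs => (gdof_bd α hα s hs).1) (fun s hs => (gdof_bd α hα s hs).2)
  have t := (t1.const_mul (1 / 2)).max (t2.const_mul (1 / 2))
  have e : max (α / 2) (1 - α / 2) = max (1 / 2 * α) (1 / 2 * (2 * max 1 α - α)) := by
    rcases le_total 1 α with h | h
    · rw [max_eq_right h, max_eq_left (by linarith), max_eq_left (by linarith)]; ring
    · rw [max_eq_left h, max_eq_right (by linarith), max_eq_right (by linarith)]; ring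
  rw [e]
  refine t.congr' ?_
  filter_upwards [eventually_gt_atTop 1] with s hs
  have : 0 < Real.logb 2 s := Real.logb_pos (by norm_num) hs
  rw [← max_div_div_right this.le, mul_div_assoc, mul_div_assoc]
end

section
/- Let Ω be a standard Borel probability space with probability measure μ. Let A, B and, for each j ∈ ℕ, alphabets 𝒱₁ⱼ, 𝒱₂ⱼ, 𝒳₁ⱼ, 𝒳₂ⱼ be nonempty finite types with the discrete measurable structure. Let W₁ : Ω → A and W₂ : Ω → B be measurable and independent under μ. Suppose random sequences are defined recursively by deterministic functions: V₁ⱼ = F₁ⱼ(W₁, (V₂ₖ)_{k<j}) and V₂ⱼ = F₂ⱼ(W₂, (V₁ₖ)_{k<j}) for all j, and channel inputs are given by X₁ᵢ = G₁ᵢ(W₁, (V₂ₖ)_{k<i}) and X₂ᵢ = G₂ᵢ(W₂, (V₁ₖ)_{k<i}). Then for every i ∈ ℕ, the random variables X₁ᵢ and X₂ᵢ are conditionally independent given the σ-algebra generated by the transcript U ᵢ = ((V₁ⱼ)_{j<i}, (V₂ⱼ)_{j<i}). -/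
open MeasureTheory ProbabilityTheory

theorem condExp_atom {Ω γ : Type*} [mΩ : MeasurableSpace Ω] (μ : Measure Ω) [IsProbabilityMeasure μ]
    [mγ : MeasurableSpace γ] [MeasurableSingletonClass γ] (U : Ω → γ)
    (hm : MeasurableSpace.comap U mγ ≤ mΩ) (E : Set Ω) (hE : MeasurableSet E) (ω : Ω) :
    (μ[E.indicator (fun _ => (1:ℝ)) | MeasurableSpace.comap U mγ]) ω * μ.real (U ⁻¹' {U ω})
      = μ.real (E ∩ U ⁻¹' {U ω}) := by
  set f := μ[E.indicator (fun _ => (1:ℝ)) | MeasurableSpace.comap U mγ] with hf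
  have hfm : Measurable[MeasurableSpace.comap U mγ] f := stronglyMeasurable_condExp.measurable
  have hc : ∀ x ∈ U ⁻¹' {U ω}, f x = f ω := by
    intro x hx
    obtain ⟨T, -, hT⟩ := hfm (measurableSet_singleton (f ω))
    have h1 : ω ∈ U ⁻¹' T := by rw [hT]; rfl
    have h2 : x ∈ U ⁻¹' T := by
      have : U x = U ω := hx
      simp only [Set.mem_preimage, this]; exact h1
    rw [hT] at h2; exact h2
  have hA : MeasurableSet[MeasurableSpace.comap U mγ] (U ⁻¹' {U ω}) :=
    ⟨_, measurableSet_singleton _, rfl⟩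
  have h1 : ∫ x in U ⁻¹' {U ω}, f x ∂μ = ∫ x in U ⁻¹' {U ω}, E.indicator (fun _ => (1:ℝ)) x ∂μ :=
    setIntegral_condExp hm ((integrable_const _).indicator hE) hA
  rw [setIntegral_congr_fun (hm _ hA) hc, setIntegral_const, integral_indicator_const _ hE,
    measureReal_restrict_apply hE] at h1
  simpa [mul_comm] using h1

theorem condIndepFun_of_atoms {Ω γ β β' : Type*} [mΩ : MeasurableSpace Ω] [StandardBorelSpace Ω]
    (μ : Measure Ω) [IsProbabilityMeasure μ]
    [mγ : MeasurableSpace γ] [MeasurableSingletonClass γ] [Countable γ] (U : Ω → γ)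
    [MeasurableSpace β] [MeasurableSpace β'] (X : Ω → β) (Y : Ω → β')
    (hX : Measurable X) (hY : Measurable Y)
    (hm : MeasurableSpace.comap U mγ ≤ mΩ)
    (h : ∀ s t, MeasurableSet s → MeasurableSet t → ∀ u,
      μ.real (X ⁻¹' s ∩ Y ⁻¹' t ∩ U ⁻¹' {u}) * μ.real (U ⁻¹' {u})
        = μ.real (X ⁻¹' s ∩ U ⁻¹' {u}) * μ.real (Y ⁻¹' t ∩ U ⁻¹' {u})) :
    CondIndepFun (MeasurableSpace.comap U mγ) hm X Y μ := by
  rw [condIndepFun_iff_condExp_inter_preimage_eq_mul hX hY]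
  intro s t hs ht
  have hae : ∀ᵐ ω ∂μ, μ (U ⁻¹' {U ω}) ≠ 0 := by
    rw [ae_iff]
    have : {ω | ¬ μ (U ⁻¹' {U ω}) ≠ 0} ⊆ ⋃ u ∈ {u | μ (U ⁻¹' {u}) = 0}, U ⁻¹' {u} := by
      intro ω hω
      simp only [Set.mem_iUnion]
      exact ⟨U ω, by simpa using hω, rfl⟩
    refine measure_mono_null this ?_
    exact (measure_biUnion_null_iff (Set.to_countable _)).2 fun u hu => hu
  filter_upwards [hae] with ω hω
  have h0 : μ.real (U ⁻¹' {U ω}) ≠ 0 := by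
    simpa [measureReal_eq_zero_iff] using hω
  have e1 := condExp_atom μ U hm _ ((hX hs).inter (hY ht)) ω
  have e2 := condExp_atom μ U hm _ (hX hs) ω
  have e3 := condExp_atom μ U hm _ (hY ht) ω
  have e := h s t hs ht (U ω)
  rw [← e1, ← e2, ← e3] at e
  have h2 := mul_ne_zero h0 h0
  apply mul_right_cancel₀ h2
  linarith

/-- Dependence-balance claim (Claim 7): if the common signals `V₁, V₂` and inputs
`X₁, X₂` are generated causally from independent messages `W₁, W₂` through deterministic
functions, then at every time `i` the inputs `X₁ᵢ` and `X₂ᵢ` are conditionally independent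
given the transcript `Uᵢ = (V₁^{i-1}, V₂^{i-1})`. -/
theorem inputs_condIndep_given_transcript
    {Ω : Type*} [mΩ : MeasurableSpace Ω] [StandardBorelSpace Ω]
    (μ : Measure Ω) [IsProbabilityMeasure μ]
    {A B : Type*} [Fintype A] [Nonempty A] [MeasurableSpace A] [MeasurableSingletonClass A]
    [Fintype B] [Nonempty B] [MeasurableSpace B] [MeasurableSingletonClass B]
    (𝒱₁ 𝒱₂ 𝒳₁ 𝒳₂ : ℕ → Type*)
    [∀ j, Fintype (𝒱₁ j)] [∀ j, Nonempty (𝒱₁ j)]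
    [∀ j, MeasurableSpace (𝒱₁ j)] [∀ j, MeasurableSingletonClass (𝒱₁ j)]
    [∀ j, Fintype (𝒱₂ j)] [∀ j, Nonempty (𝒱₂ j)]
    [∀ j, MeasurableSpace (𝒱₂ j)] [∀ j, MeasurableSingletonClass (𝒱₂ j)]
    [∀ i, Fintype (𝒳₁ i)] [∀ i, Nonempty (𝒳₁ i)]
    [∀ i, MeasurableSpace (𝒳₁ i)] [∀ i, MeasurableSingletonClass (𝒳₁ i)]
    [∀ i, Fintype (𝒳₂ i)] [∀ i, Nonempty (𝒳₂ i)]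
    [∀ i, MeasurableSpace (𝒳₂ i)] [∀ i, MeasurableSingletonClass (𝒳₂ i)]
    (W₁ : Ω → A) (W₂ : Ω → B) (hW₁ : Measurable W₁) (hW₂ : Measurable W₂)
    (hIndep : IndepFun W₁ W₂ μ)
    (F₁ : (j : ℕ) → A → ((k : Fin j) → 𝒱₂ k.1) → 𝒱₁ j)
    (F₂ : (j : ℕ) → B → ((k : Fin j) → 𝒱₁ k.1) → 𝒱₂ j)
    (G₁ : (i : ℕ) → A → ((k : Fin i) → 𝒱₂ k.1) → 𝒳₁ i)
    (G₂ : (i : ℕ) → B → ((k : Fin i) → 𝒱₁ k.1) → 𝒳₂ i)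
    (V₁ : (j : ℕ) → Ω → 𝒱₁ j) (V₂ : (j : ℕ) → Ω → 𝒱₂ j)
    (X₁ : (i : ℕ) → Ω → 𝒳₁ i) (X₂ : (i : ℕ) → Ω → 𝒳₂ i)
    (hV₁ : ∀ (j : ℕ) (ω : Ω), V₁ j ω = F₁ j (W₁ ω) (fun k => V₂ k.1 ω))
    (hV₂ : ∀ (j : ℕ) (ω : Ω), V₂ j ω = F₂ j (W₂ ω) (fun k => V₁ k.1 ω))
    (hX₁ : ∀ (i : ℕ) (ω : Ω), X₁ i ω = G₁ i (W₁ ω) (fun k => V₂ k.1 ω))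
    (hX₂ : ∀ (i : ℕ) (ω : Ω), X₂ i ω = G₂ i (W₂ ω) (fun k => V₁ k.1 ω))
    (hm : ∀ i : ℕ,
      MeasurableSpace.comap
        (fun ω => ((fun j : Fin i => V₁ j.1 ω), (fun j : Fin i => V₂ j.1 ω)))
        inferInstance ≤ mΩ) :
    ∀ i : ℕ, CondIndepFun
      (MeasurableSpace.comap
        (fun ω => ((fun j : Fin i => V₁ j.1 ω), (fun j : Fin i => V₂ j.1 ω)))
        inferInstance)
      (hm i) (X₁ i) (X₂ i) μ := by
  intro i
  -- measurability of signals
  have hUm : Measurable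
      (fun ω => ((fun j : Fin i => V₁ j.1 ω), (fun j : Fin i => V₂ j.1 ω))) :=
    measurable_iff_comap_le.2 (hm i)
  have hX₁m : Measurable (X₁ i) := by
    have : X₁ i = (fun p : A × ((k : Fin i) → 𝒱₂ k.1) => G₁ i p.1 p.2) ∘
        (fun ω => (W₁ ω, fun k : Fin i => V₂ k.1 ω)) := funext (hX₁ i)
    rw [this]
    exact (measurable_of_countable _).comp (hW₁.prodMk hUm.snd)
  have hX₂m : Measurable (X₂ i) := by
    have : X₂ i = (fun p : B × ((k : Fin i) → 𝒱₁ k.1) => G₂ i p.1 p.2) ∘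
        (fun ω => (W₂ ω, fun k : Fin i => V₁ k.1 ω)) := funext (hX₂ i)
    rw [this]
    exact (measurable_of_countable _).comp (hW₂.prodMk hUm.fst)
  refine condIndepFun_of_atoms μ _ _ _ hX₁m hX₂m (hm i) ?_
  rintro s t hs ht ⟨u₁, u₂⟩
  let P : Set A := {a | ∀ j : Fin i, u₁ j = F₁ j a (fun k => u₂ ⟨k.1, k.2.trans j.2⟩)}
  let Q : Set B := {b | ∀ j : Fin i, u₂ j = F₂ j b (fun k => u₁ ⟨k.1, k.2.trans j.2⟩)}
  let S : Set A := {a | G₁ i a u₂ ∈ s}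
  let T : Set B := {b | G₂ i b u₁ ∈ t}
  have key : ∀ ω, ((fun j : Fin i => V₁ j.1 ω) = u₁ ∧ (fun j : Fin i => V₂ j.1 ω) = u₂) ↔
      (W₁ ω ∈ P ∧ W₂ ω ∈ Q) := by
    intro ω
    constructor
    · rintro ⟨rfl, rfl⟩
      exact ⟨fun j => hV₁ j ω, fun j => hV₂ j ω⟩
    · rintro ⟨hP, hQ⟩
      have : ∀ n (hn : n < i), V₁ n ω = u₁ ⟨n, hn⟩ ∧ V₂ n ω = u₂ ⟨n, hn⟩ := by
        intro n
        induction n using Nat.strong_induction_on with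
        | _ n ih =>
          intro hn
          have h1 := hP ⟨n, hn⟩
          have h2 := hQ ⟨n, hn⟩
          rw [h1, h2, hV₁, hV₂]
          constructor
          · congr 1
            funext k
            exact (ih k.1 k.2 (k.2.trans hn)).2
          · congr 1
            funext k
            exact (ih k.1 k.2 (k.2.trans hn)).1
      exact ⟨funext fun j => (this j.1 j.2).1, funext fun j => (this j.1 j.2).2⟩
  have hmul : ∀ (C : Set A) (D : Set B),
      μ.real (W₁ ⁻¹' C ∩ W₂ ⁻¹' D) = μ.real (W₁ ⁻¹' C) * μ.real (W₂ ⁻¹' D) := by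
    intro C D
    have := hIndep.measure_inter_preimage_eq_mul C D
      (Set.toFinite C).measurableSet (Set.toFinite D).measurableSet
    simp only [Measure.real, this, ENNReal.toReal_mul]
  have hS : ∀ ω, (fun j : Fin i => V₂ j.1 ω) = u₂ → (X₁ i ω ∈ s ↔ W₁ ω ∈ S) := by
    rintro ω rfl
    rw [hX₁]; rfl
  have hT : ∀ ω, (fun j : Fin i => V₁ j.1 ω) = u₁ → (X₂ i ω ∈ t ↔ W₂ ω ∈ T) := by
    rintro ω rfl
    rw [hX₂]; rfl
  set Z := (fun ω => ((fun j : Fin i => V₁ j.1 ω), (fun j : Fin i => V₂ j.1 ω))) ⁻¹' {(u₁, u₂)}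
    with hZ
  have hZm : ∀ ω, ω ∈ Z ↔
      ((fun j : Fin i => V₁ j.1 ω) = u₁ ∧ (fun j : Fin i => V₂ j.1 ω) = u₂) := by
    intro ω
    simp only [hZ, Set.mem_preimage, Set.mem_singleton_iff, Prod.mk.injEq]
  have a0 : Z = W₁ ⁻¹' P ∩ W₂ ⁻¹' Q := by
    ext ω
    exact (hZm ω).trans (key ω)
  have a1 : X₁ i ⁻¹' s ∩ Z = W₁ ⁻¹' (S ∩ P) ∩ W₂ ⁻¹' Q := by
    ext ω
    constructor
    · rintro ⟨h1, hz⟩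
      have hz' := (hZm ω).1 hz
      have hk := (key ω).1 hz'
      exact ⟨⟨(hS ω hz'.2).1 h1, hk.1⟩, hk.2⟩
    · rintro ⟨⟨h1, hp⟩, hq⟩
      have hz' := (key ω).2 ⟨hp, hq⟩
      exact ⟨(hS ω hz'.2).2 h1, (hZm ω).2 hz'⟩
  have a2 : X₂ i ⁻¹' t ∩ Z = W₁ ⁻¹' P ∩ W₂ ⁻¹' (T ∩ Q) := by
    ext ω
    constructor
    · rintro ⟨h1, hz⟩
      have hz' := (hZm ω).1 hz
      have hk := (key ω).1 hz'
      exact ⟨hk.1, (hT ω hz'.1).1 h1, hk.2⟩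
    · rintro ⟨hp, h1, hq⟩
      have hz' := (key ω).2 ⟨hp, hq⟩
      exact ⟨(hT ω hz'.1).2 h1, (hZm ω).2 hz'⟩
  have a3 : X₁ i ⁻¹' s ∩ X₂ i ⁻¹' t ∩ Z = W₁ ⁻¹' (S ∩ P) ∩ W₂ ⁻¹' (T ∩ Q) := by
    ext ω
    constructor
    · rintro ⟨⟨h1, h2⟩, hz⟩
      have hz' := (hZm ω).1 hz
      have hk := (key ω).1 hz'
      exact ⟨⟨(hS ω hz'.2).1 h1, hk.1⟩, (hT ω hz'.1).1 h2, hk.2⟩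
    · rintro ⟨⟨h1, hp⟩, h2, hq⟩
      have hz' := (key ω).2 ⟨hp, hq⟩
      exact ⟨⟨(hS ω hz'.2).2 h1, (hT ω hz'.1).2 h2⟩, (hZm ω).2 hz'⟩
  rw [a3, a1, a2, a0, hmul, hmul, hmul, hmul]
  ring
end
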